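/- arXiv:2506.16753 — 8 statements merged into one kernel-verified Lean document; each statement's English description precedes it below -/
import Mathlib

section
/- Let S be a finite nonempty type, let p : S → ℝ be a probability vector with p s > 0 for all s, let q : S → ℝ, and let α > 0. Then for every probability vector ν on S, ∑_s ν s * q s − α * ∑_s ν s * (Real.log (ν s) − Real.log (p s)) ≤ α * Real.log (∑_s p s * Real.exp (q s / α)). -/
/-!
For the Gibbs weights `u s = p s * exp (q s / α)`, the regularized value of `ν` is
`α * ∑ s, ν s * (log (u s) - log (ν s))`. The log sum inequality, which comes from the tangent line
to `log` at the ratio of the total masses of `u` and `ν`, bounds this by `α * log (∑ s, u s)`.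
-/

open Finset

theorem mul_log_sub_log_le_mul_log_add {w u c : ℝ} (hw : 0 ≤ w) (hu : 0 ≤ u) (hwu : u = 0 → w = 0)
    (hc : 0 < c) :
    w * (Real.log u - Real.log w) ≤ w * Real.log c + (u / c - w) := by
  rcases hw.eq_or_lt with rfl | hw
  · simpa using div_nonneg hu hc.le
  have hu : 0 < u := hu.lt_of_ne' (mt hwu hw.ne')
  have tangent : Real.log u - Real.log w - Real.log c ≤ u / w / c - 1 := by
    rw [← Real.log_div hu.ne' hw.ne', ← Real.log_div (div_pos hu hw).ne' hc.ne']
    exact Real.log_le_sub_one_of_pos (by positivity)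
  calc w * (Real.log u - Real.log w)
      = w * Real.log c + w * (Real.log u - Real.log w - Real.log c) := by ring
    _ ≤ w * Real.log c + w * (u / w / c - 1) := by gcongr
    _ = w * Real.log c + (u / c - w) := by field_simp

theorem sum_mul_log_sub_log_le {ι : Type*} {t : Finset ι} {w u : ι → ℝ}
    (hw : ∀ i ∈ t, 0 ≤ w i) (hu : ∀ i ∈ t, 0 ≤ u i) (hwu : ∀ i ∈ t, u i = 0 → w i = 0) :
    ∑ i ∈ t, w i * (Real.log (u i) - Real.log (w i)) ≤
      (∑ i ∈ t, w i) * (Real.log (∑ i ∈ t, u i) - Real.log (∑ i ∈ t, w i)) := by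
  rcases (sum_nonneg hw).eq_or_lt with hW | hW
  · have hw_zero : ∀ i ∈ t, w i = 0 := (sum_eq_zero_iff_of_nonneg hw).1 hW.symm
    rw [← hW, zero_mul]
    exact (sum_eq_zero fun i hi => by rw [hw_zero i hi, zero_mul]).le
  have hU : 0 < ∑ i ∈ t, u i := by
    obtain ⟨i, hi, hwi⟩ := exists_ne_zero_of_sum_ne_zero hW.ne'
    exact sum_pos' hu ⟨i, hi, (hu i hi).lt_of_ne' (mt (hwu i hi) hwi)⟩
  set W := ∑ i ∈ t, w i
  set U := ∑ i ∈ t, u i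
  calc ∑ i ∈ t, w i * (Real.log (u i) - Real.log (w i))
      ≤ ∑ i ∈ t, (w i * Real.log (U / W) + (u i / (U / W) - w i)) :=
        sum_le_sum fun i hi =>
          mul_log_sub_log_le_mul_log_add (hw i hi) (hu i hi) (hwu i hi) (div_pos hU hW)
    _ = W * Real.log (U / W) + (U / (U / W) - W) := by
        rw [sum_add_distrib, sum_sub_distrib, ← sum_mul, ← sum_div]
    _ = W * (Real.log U - Real.log W) := by
        rw [div_div_cancel₀ hU.ne', sub_self, add_zero, Real.log_div hU.ne' hW.ne']

theorem mul_sub_mul_log_sub_log_eq {v p q α : ℝ} (hvp : p = 0 → v = 0) (hα : α ≠ 0) :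
    v * q - α * (v * (Real.log v - Real.log p)) =
      α * (v * (Real.log (p * Real.exp (q / α)) - Real.log v)) := by
  rcases eq_or_ne p 0 with hp | hp
  · simp [hvp hp]
  · rw [Real.log_mul hp (Real.exp_ne_zero _), Real.log_exp]
    field_simp
    ring

theorem klSoftAdversary_upper_bound_general {ι : Type*} {t : Finset ι} {p q ν : ι → ℝ} {α : ℝ}
    (hp : ∀ s ∈ t, 0 ≤ p s) (hα : 0 < α) (hν : ∀ s ∈ t, 0 ≤ ν s) (hν_sum : ∑ s ∈ t, ν s = 1)
    (hνp : ∀ s ∈ t, p s = 0 → ν s = 0) :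
    (∑ s ∈ t, ν s * q s) - α * ∑ s ∈ t, ν s * (Real.log (ν s) - Real.log (p s)) ≤
      α * Real.log (∑ s ∈ t, p s * Real.exp (q s / α)) := by
  have gibbs_le : ∑ s ∈ t, ν s * (Real.log (p s * Real.exp (q s / α)) - Real.log (ν s)) ≤
      Real.log (∑ s ∈ t, p s * Real.exp (q s / α)) := by
    simpa only [hν_sum, Real.log_one, sub_zero, one_mul] using
      sum_mul_log_sub_log_le hν (fun s hs => mul_nonneg (hp s hs) (Real.exp_nonneg (q s / α)))
        fun s hs h => hνp s hs ((mul_eq_zero_iff_right (Real.exp_ne_zero _)).1 h)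
  calc (∑ s ∈ t, ν s * q s) - α * ∑ s ∈ t, ν s * (Real.log (ν s) - Real.log (p s))
      = α * ∑ s ∈ t, ν s * (Real.log (p s * Real.exp (q s / α)) - Real.log (ν s)) := by
        rw [mul_sum, mul_sum, ← sum_sub_distrib]
        exact sum_congr rfl fun s hs => mul_sub_mul_log_sub_log_eq (hνp s hs) hα.ne'
    _ ≤ α * Real.log (∑ s ∈ t, p s * Real.exp (q s / α)) := by gcongr

/-- Upper-bound half of the KL-soft-constrained adversary lemma:
for any probability vector `ν`, the KL-regularized expected value is bounded
by the weighted log-sum-exp. -/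
theorem klSoftAdversary_upper_bound
    {S : Type*} [Fintype S] [Nonempty S]
    (p : S → ℝ) (hp_nonneg : ∀ s, 0 ≤ p s) (hp_sum : ∑ s, p s = 1)
    (hp_pos : ∀ s, 0 < p s)
    (q : S → ℝ) (α : ℝ) (hα : 0 < α)
    (ν : S → ℝ) (hν_nonneg : ∀ s, 0 ≤ ν s) (hν_sum : ∑ s, ν s = 1) :
    (∑ s, ν s * q s) - α * ∑ s, ν s * (Real.log (ν s) - Real.log (p s)) ≤
      α * Real.log (∑ s, p s * Real.exp (q s / α)) :=
  klSoftAdversary_upper_bound_general (fun s _ => hp_nonneg s) hα (fun s _ => hν_nonneg s) hν_sum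
    fun s _ h => absurd h (hp_pos s).ne'
end

section
/- Let S be a finite nonempty type, let p : S → ℝ be a probability vector with p s > 0 for all s, let q : S → ℝ, and let α > 0. Set Z = ∑_s p s * Real.exp (q s / α) and define ν* : S → ℝ by ν* s = p s * Real.exp (q s / α) / Z. Then ν* is a probability vector with ν* s > 0 for all s, and it attains the optimum: ∑_s ν* s * q s − α * ∑_s ν* s * (Real.log (ν* s) − Real.log (p s)) = α * Real.log Z. -/
/-! The log-density `log (ν* s / p s)` equals `q s / α - log Z`, so subtracting `α` times it from
`q s` leaves the constant `α * log Z`, whose average under `ν*` is itself. -/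

section Gibbs

variable {S : Type*} [Fintype S]

/-- The partition function `Z` of the reference weights `p`, which need not be normalized, tilted by
the reward `q` at temperature `α`. -/
noncomputable def partitionFunction (p q : S → ℝ) (α : ℝ) : ℝ :=
  ∑ s, p s * Real.exp (q s / α)

/-- The Gibbs distribution `ν*` obtained by tilting `p` by the reward `q` at temperature `α`. An
adversary against the value function `V` has reward `q = -V`. -/
noncomputable def gibbsWeight (p q : S → ℝ) (α : ℝ) (s : S) : ℝ :=
  p s * Real.exp (q s / α) / partitionFunction p q α

/-- The Kullback–Leibler divergence of `ν` from `p` as a finite sum. A state with `ν s = 0`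
contributes `0`; a state with `p s = 0 < ν s` contributes `ν s * log (ν s)` rather than `∞`, because
`Real.log 0 = 0`. -/
noncomputable def discreteKL (ν p : S → ℝ) : ℝ :=
  ∑ s, ν s * (Real.log (ν s) - Real.log (p s))

/-- The objective of the soft-constrained adversary: the expected reward under `ν`, penalized by
`α` times the divergence from `p`. -/
noncomputable def klSoftObjective (p q : S → ℝ) (α : ℝ) (ν : S → ℝ) : ℝ :=
  ∑ s, ν s * q s - α * discreteKL ν p

variable {p q : S → ℝ} {α : ℝ}

theorem partitionFunction_pos (hp : 0 < p) : 0 < partitionFunction p q α := by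
  obtain ⟨hp_nonneg, s, hs⟩ := Pi.lt_def.mp hp
  exact Finset.sum_pos' (fun t _ => mul_nonneg (hp_nonneg t) (Real.exp_nonneg _))
    ⟨s, Finset.mem_univ s, mul_pos hs (Real.exp_pos _)⟩

theorem gibbsWeight_nonneg (hp : 0 ≤ p) (s : S) : 0 ≤ gibbsWeight p q α s :=
  have tilted_nonneg (t : S) : 0 ≤ p t * Real.exp (q t / α) :=
    mul_nonneg (hp t) (Real.exp_nonneg _)
  div_nonneg (tilted_nonneg s) (Finset.sum_nonneg fun t _ => tilted_nonneg t)

theorem gibbsWeight_pos_iff (hp : 0 < p) (s : S) : 0 < gibbsWeight p q α s ↔ 0 < p s := by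
  rw [gibbsWeight, div_pos_iff_of_pos_right (partitionFunction_pos hp),
    mul_pos_iff_of_pos_right (Real.exp_pos _)]

theorem sum_gibbsWeight (hZ : partitionFunction p q α ≠ 0) : ∑ s, gibbsWeight p q α s = 1 := by
  simp only [gibbsWeight]
  rw [← Finset.sum_div, ← partitionFunction, div_self hZ]

theorem log_gibbsWeight_sub_log (hZ : partitionFunction p q α ≠ 0) {s : S} (hs : p s ≠ 0) :
    Real.log (gibbsWeight p q α s) - Real.log (p s) =
      q s / α - Real.log (partitionFunction p q α) := by
  rw [gibbsWeight, Real.log_div (mul_ne_zero hs (Real.exp_ne_zero _)) hZ,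
    Real.log_mul hs (Real.exp_ne_zero _), Real.log_exp]
  ring

theorem discreteKL_gibbsWeight (hZ : partitionFunction p q α ≠ 0) :
    discreteKL (gibbsWeight p q α) p =
      (∑ s, gibbsWeight p q α s * q s) / α - Real.log (partitionFunction p q α) := by
  have weighted_log_density (s : S) :
      gibbsWeight p q α s * (Real.log (gibbsWeight p q α s) - Real.log (p s)) =
        gibbsWeight p q α s * (q s / α - Real.log (partitionFunction p q α)) := by
    obtain hs | hs := eq_or_ne (p s) 0
    · simp [gibbsWeight, hs]
    · rw [log_gibbsWeight_sub_log hZ hs]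
  calc discreteKL (gibbsWeight p q α) p
      = ∑ s, gibbsWeight p q α s * (q s / α - Real.log (partitionFunction p q α)) :=
        Finset.sum_congr rfl fun s _ => weighted_log_density s
    _ = (∑ s, gibbsWeight p q α s * q s) / α - Real.log (partitionFunction p q α) := by
        simp only [mul_sub, Finset.sum_sub_distrib, ← mul_div_assoc, ← Finset.sum_div,
          ← Finset.sum_mul, sum_gibbsWeight hZ, one_mul]

theorem klSoftObjective_gibbsWeight (hα : α ≠ 0) (hZ : partitionFunction p q α ≠ 0) :
    klSoftObjective p q α (gibbsWeight p q α) = α * Real.log (partitionFunction p q α) := by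
  rw [klSoftObjective, discreteKL_gibbsWeight hZ, mul_sub, mul_div_cancel₀ _ hα, sub_sub_cancel]

end Gibbs

theorem klSoftAdversary_gibbs_attains_general
    {S : Type*} [Fintype S] (p : S → ℝ) (hp : 0 < p) (q : S → ℝ) (α : ℝ) (hα : α ≠ 0)
    (Z : ℝ) (hZ : Z = ∑ s, p s * Real.exp (q s / α))
    (νstar : S → ℝ) (hνstar : ∀ s, νstar s = p s * Real.exp (q s / α) / Z) :
    (∀ s, 0 ≤ νstar s) ∧ (∑ s, νstar s = 1) ∧ (∀ s, 0 < νstar s ↔ 0 < p s) ∧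
      (∑ s, νstar s * q s) -
          α * ∑ s, νstar s * (Real.log (νstar s) - Real.log (p s)) =
        α * Real.log Z := by
  obtain rfl : Z = partitionFunction p q α := hZ
  obtain rfl : νstar = gibbsWeight p q α := funext hνstar
  have hZ_ne : partitionFunction p q α ≠ 0 := (partitionFunction_pos hp).ne'
  exact ⟨gibbsWeight_nonneg hp.le, sum_gibbsWeight hZ_ne, gibbsWeight_pos_iff hp,
    klSoftObjective_gibbsWeight hα hZ_ne⟩

/-- Attainment half of the KL-soft-constrained adversary lemma: the Gibbs
distribution `ν* s = p s * exp (q s / α) / Z` is a positive probability vector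
attaining the optimum `α * log Z`. -/
theorem klSoftAdversary_gibbs_attains
    {S : Type*} [Fintype S] [Nonempty S]
    (p : S → ℝ) (hp_nonneg : ∀ s, 0 ≤ p s) (hp_sum : ∑ s, p s = 1)
    (hp_pos : ∀ s, 0 < p s)
    (q : S → ℝ) (α : ℝ) (hα : 0 < α)
    (Z : ℝ) (hZ : Z = ∑ s, p s * Real.exp (q s / α))
    (νstar : S → ℝ) (hνstar : ∀ s, νstar s = p s * Real.exp (q s / α) / Z) :
    (∀ s, 0 ≤ νstar s) ∧ (∑ s, νstar s = 1) ∧ (∀ s, 0 < νstar s) ∧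
      (∑ s, νstar s * q s) -
          α * ∑ s, νstar s * (Real.log (νstar s) - Real.log (p s)) =
        α * Real.log Z := by
  obtain ⟨hnonneg, hsum, hpos_iff, hvalue⟩ :=
    klSoftAdversary_gibbs_attains_general p (lt_of_strongLT hp_pos) q α hα.ne' Z hZ νstar hνstar
  exact ⟨hnonneg, hsum, fun s => (hpos_iff s).mpr (hp_pos s), hvalue⟩
end

section
/- Let S be a finite nonempty type, let p : S → ℝ be a probability vector with p s > 0 for all s, and let α > 0. Then for all q₁, q₂ : S → ℝ, |α * Real.log (∑_s p s * Real.exp (q₁ s / α)) − α * Real.log (∑_s p s * Real.exp (q₂ s / α))| ≤ max_s |q₁ s − q₂ s|. -/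
/-!
A monotone functional `F` commuting with the addition of constants is nonexpansive for the sup
norm: `q₁ ≤ q₂ + c` gives `F q₁ ≤ F (q₂ + c) = F q₂ + c`, and the roles of `q₁` and `q₂` can be
exchanged. At negative temperature the log-sum-exp functional is conjugate, under `q ↦ -q`, to the
one at positive temperature, hence it is still monotone.
-/

theorem abs_sub_le_of_monotone_of_map_add_const {ι G : Type*} [AddCommGroup G] [LinearOrder G]
    [IsOrderedAddMonoid G] {F : (ι → G) → G} (hF_mono : Monotone F)
    (hF_add : ∀ q c, F (q + Function.const ι c) = F q + c)
    {q₁ q₂ : ι → G} {c : G} (hc : ∀ i, |q₁ i - q₂ i| ≤ c) : |F q₁ - F q₂| ≤ c := by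
  have map_sub_le {u v : ι → G} (huv : ∀ i, u i - v i ≤ c) : F u - F v ≤ c := by
    rw [sub_le_iff_le_add']
    calc
      F u ≤ F (v + Function.const ι c) := hF_mono fun i => sub_le_iff_le_add'.mp (huv i)
      _ = F v + c := hF_add v c
  refine abs_sub_le_iff.mpr ⟨map_sub_le fun i => ?_, map_sub_le fun i => ?_⟩
  · exact (abs_sub_le_iff.mp (hc i)).1
  · exact (abs_sub_le_iff.mp (hc i)).2

/-- The weighted log-sum-exp functional `q ↦ α log ∑ s, w s exp (q s / α)` with weights `w` and
temperature `α`; a soft maximum for `0 < α` and a soft minimum for `α < 0`. -/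
noncomputable def logSumExp {S : Type*} [Fintype S] (w : S → ℝ) (α : ℝ) (q : S → ℝ) : ℝ :=
  α * Real.log (∑ s, w s * Real.exp (q s / α))

section LogSumExp

variable {S : Type*} [Fintype S] {w : S → ℝ} {α : ℝ}

theorem sum_mul_exp_pos (hw : ∀ s, 0 ≤ w s) (hw_sum : 0 < ∑ s, w s) (f : S → ℝ) :
    0 < ∑ s, w s * Real.exp (f s) := by
  obtain ⟨s, hs, hws⟩ := (Finset.sum_pos_iff_of_nonneg fun s _ => hw s).mp hw_sum
  exact Finset.sum_pos' (fun t _ => mul_nonneg (hw t) (Real.exp_pos _).le)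
    ⟨s, hs, mul_pos hws (Real.exp_pos _)⟩

theorem neg_logSumExp_neg_neg (w : S → ℝ) (α : ℝ) (q : S → ℝ) :
    -logSumExp w (-α) (-q) = logSumExp w α q := by
  simp [logSumExp]

theorem logSumExp_monotone_of_pos (hw : ∀ s, 0 ≤ w s) (hw_sum : 0 < ∑ s, w s) (hα : 0 < α) :
    Monotone (logSumExp w α) := by
  intro q₁ q₂ hq
  have sum_le : ∑ s, w s * Real.exp (q₁ s / α) ≤ ∑ s, w s * Real.exp (q₂ s / α) := by
    gcongr with s
    · exact hw s
    · exact hq s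
  exact mul_le_mul_of_nonneg_left (Real.log_le_log (sum_mul_exp_pos hw hw_sum _) sum_le) hα.le

theorem logSumExp_monotone (hw : ∀ s, 0 ≤ w s) (hw_sum : 0 < ∑ s, w s) (hα : α ≠ 0) :
    Monotone (logSumExp w α) := by
  rcases hα.lt_or_gt with hα_neg | hα_pos
  · intro q₁ q₂ hq
    rw [← neg_logSumExp_neg_neg w α q₁, ← neg_logSumExp_neg_neg w α q₂]
    exact neg_le_neg (logSumExp_monotone_of_pos hw hw_sum (neg_pos.mpr hα_neg) (neg_le_neg hq))
  · exact logSumExp_monotone_of_pos hw hw_sum hα_pos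

theorem logSumExp_add_const (hw : ∀ s, 0 ≤ w s) (hw_sum : 0 < ∑ s, w s) (hα : α ≠ 0)
    (q : S → ℝ) (c : ℝ) :
    logSumExp w α (q + Function.const S c) = logSumExp w α q + c := by
  have sum_eq : ∑ s, w s * Real.exp ((q + Function.const S c) s / α) =
      (∑ s, w s * Real.exp (q s / α)) * Real.exp (c / α) := by
    simp only [Pi.add_apply, Function.const_apply, add_div, Real.exp_add, Finset.sum_mul,
      mul_assoc]
  unfold logSumExp
  rw [sum_eq, Real.log_mul (sum_mul_exp_pos hw hw_sum _).ne' (Real.exp_ne_zero _), Real.log_exp,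
    mul_add, mul_div_cancel₀ c hα]

theorem logSumExp_lipschitz_general [Nonempty S] (hw : ∀ s, 0 ≤ w s) (hw_sum : 0 < ∑ s, w s)
    (hα : α ≠ 0) (q₁ q₂ : S → ℝ) :
    |logSumExp w α q₁ - logSumExp w α q₂| ≤
      Finset.univ.sup' Finset.univ_nonempty (fun s => |q₁ s - q₂ s|) :=
  abs_sub_le_of_monotone_of_map_add_const (logSumExp_monotone hw hw_sum hα)
    (logSumExp_add_const hw hw_sum hα)
    fun s => Finset.le_sup' (fun s => |q₁ s - q₂ s|) (Finset.mem_univ s)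

end LogSumExp

/-- 1-Lipschitz (in sup norm) property of the weighted log-sum-exp functional. -/
theorem logSumExp_lipschitz
    {S : Type*} [Fintype S] [Nonempty S]
    (p : S → ℝ) (hp_nonneg : ∀ s, 0 ≤ p s) (hp_sum : ∑ s, p s = 1)
    (hp_pos : ∀ s, 0 < p s)
    (α : ℝ) (hα : 0 < α) (q₁ q₂ : S → ℝ) :
    |α * Real.log (∑ s, p s * Real.exp (q₁ s / α)) -
        α * Real.log (∑ s, p s * Real.exp (q₂ s / α))| ≤
      Finset.univ.sup' Finset.univ_nonempty (fun s => |q₁ s - q₂ s|) :=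
  logSumExp_lipschitz_general hp_nonneg (hp_sum ▸ one_pos) hα.ne' q₁ q₂
end

section
/- Fix finite nonempty types S (states; the observation space is also S) and A (actions), a transition kernel F : S → A → S → ℝ with F s a s' ≥ 0 and ∑_{s'} F s a s' = 1 for all s, a; a perturbation prior p : S → S → ℝ with p s s̃ > 0 and ∑_{s̃} p s s̃ = 1 for all s; a policy π : S → A → ℝ with π s̃ a ≥ 0 and ∑_a π s̃ a = 1 for all s̃; a reward r : S → A → ℝ; a discount factor γ with 0 ≤ γ < 1; and coefficients α_attk > 0, α_ent ∈ ℝ. Define H(s̃) = −∑_a π s̃ a * Real.log (π s̃ a), and for Q : S → A → ℝ define V_Q(s, s̃) = ∑_a π s̃ a * Q s a + α_ent * H(s̃). Define the soft-worst (KL) Bellman operator by (T Q)(s, a) = r s a + γ * ∑_{s'} F s a s' * ( −α_attk * Real.log ( ∑_{s̃} p s' s̃ * Real.exp ( −V_Q(s', s̃) / α_attk ) ) ). Then T is a γ-contraction in sup norm: for all Q₁, Q₂ : S → A → ℝ, max_{(s,a)} |(T Q₁)(s,a) − (T Q₂)(s,a)| ≤ γ * max_{(s,a)} |Q₁(s,a)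 − Q₂(s,a)|. -/
/-!
The KL adversary's optimal value `-α log ∑ t, p t * exp (-u t / α)` is monotone in `u` and commutes
with adding a constant to `u`. A real functional with these two properties is `1`-Lipschitz for the
sup norm, because `u ≤ v + ‖u - v‖`. Averaging over actions and over successor states does not
expand the sup norm either, so the only factor that remains is the discount.
-/

section SupNorm

variable {ι κ : Type*} [Fintype ι] [Fintype κ]

theorem sup'_univ_norm_apply_eq_norm {E : Type*} [SeminormedAddCommGroup E]
    [Nonempty ι] [Nonempty κ] (f : ι → κ → E) :
    Finset.univ.sup' Finset.univ_nonempty (fun x : ι × κ => ‖f x.1 x.2‖) = ‖f‖ := by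
  refine le_antisymm
    (Finset.sup'_le _ _ fun x _ => (norm_le_pi_norm (f x.1) x.2).trans (norm_le_pi_norm f x.1)) ?_
  refine (pi_norm_le_iff_of_nonempty f).2 fun i => (pi_norm_le_iff_of_nonempty (f i)).2 fun k => ?_
  exact Finset.le_sup' (fun x : ι × κ => ‖f x.1 x.2‖) (Finset.mem_univ (i, k))

theorem abs_sum_mul_le_of_sum_abs_le_one {w x : ι → ℝ} {C : ℝ} (hw : ∑ i, |w i| ≤ 1)
    (hC : 0 ≤ C) (hx : ∀ i, |x i| ≤ C) : |∑ i, w i * x i| ≤ C :=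
  calc |∑ i, w i * x i|
      ≤ ∑ i, |w i| * |x i| := by
        simpa only [abs_mul] using Finset.abs_sum_le_sum_abs (fun i => w i * x i) Finset.univ
    _ ≤ ∑ i, |w i| * C := by gcongr with i; exact hx i
    _ = (∑ i, |w i|) * C := (Finset.sum_mul ..).symm
    _ ≤ C := mul_le_of_le_one_left hC hw

theorem lipschitzWith_one_of_monotone_of_map_add_const {f : (ι → ℝ) → ℝ} (hf : Monotone f)
    (hadd : ∀ u c, f (fun i => u i + c) = f u + c) : LipschitzWith 1 f := by
  refine LipschitzWith.of_le_add fun u v => ?_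
  rw [← hadd]
  refine hf fun i => ?_
  linarith [Real.sub_le_dist (u i) (v i), dist_le_pi_dist u v i]

end SupNorm

section SoftMin

variable {ι : Type*} [Fintype ι] {α : ℝ} {w : ι → ℝ}

/-- The soft minimum of `u` at temperature `α` with weights `w`. If `0 < α` and `w` is a probability
vector, this is the minimum over probability vectors `q` of `∑ i, q i * u i + α * KL(q ‖ w)`,
attained at the Gibbs distribution. A negative `α` gives the corresponding soft maximum. -/
noncomputable def softMin (α : ℝ) (w u : ι → ℝ) : ℝ :=
  -α * Real.log (∑ i, w i * Real.exp (-u i / α))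

theorem sum_mul_exp_pos_s3 (hw : 0 < w) (v : ι → ℝ) : 0 < ∑ i, w i * Real.exp (v i) := by
  obtain ⟨hw0, i, hi⟩ := Pi.lt_def.1 hw
  exact Finset.sum_pos' (fun j _ => mul_nonneg (hw0 j) (Real.exp_pos _).le)
    ⟨i, Finset.mem_univ i, mul_pos hi (Real.exp_pos _)⟩

theorem log_sum_mul_exp_mono (hw : 0 < w) :
    Monotone fun v : ι → ℝ => Real.log (∑ i, w i * Real.exp (v i)) := by
  intro u v huv
  refine Real.log_le_log (sum_mul_exp_pos_s3 hw u) (Finset.sum_le_sum fun i _ => ?_)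
  exact mul_le_mul_of_nonneg_left (Real.exp_le_exp.2 (huv i)) (hw.le i)

theorem log_sum_mul_exp_add_const (hw : 0 < w) (v : ι → ℝ) (c : ℝ) :
    Real.log (∑ i, w i * Real.exp (v i + c)) = Real.log (∑ i, w i * Real.exp (v i)) + c := by
  simp only [Real.exp_add, ← mul_assoc, ← Finset.sum_mul]
  rw [Real.log_mul (sum_mul_exp_pos_s3 hw v).ne' (Real.exp_pos c).ne', Real.log_exp]

theorem softMin_mono (hw : 0 < w) : Monotone (softMin α w) := by
  intro u v huv
  rcases le_total 0 α with hα | hα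
  · refine mul_le_mul_of_nonpos_left (log_sum_mul_exp_mono hw fun i => ?_) (neg_nonpos.2 hα)
    exact div_le_div_of_nonneg_right (neg_le_neg (huv i)) hα
  · refine mul_le_mul_of_nonneg_left (log_sum_mul_exp_mono hw fun i => ?_) (neg_nonneg.2 hα)
    exact div_le_div_of_nonpos_of_le hα (neg_le_neg (huv i))

theorem softMin_add_const (hα : α ≠ 0) (hw : 0 < w) (u : ι → ℝ) (c : ℝ) :
    softMin α w (fun i => u i + c) = softMin α w u + c := by
  have shift_exponent (i : ι) : -(u i + c) / α = -u i / α + -c / α := by ring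
  simp only [softMin, shift_exponent, log_sum_mul_exp_add_const hw (fun i => -u i / α)]
  field_simp
  ring

theorem lipschitzWith_softMin (hα : α ≠ 0) (hw : 0 < w) : LipschitzWith 1 (softMin α w) :=
  lipschitzWith_one_of_monotone_of_map_add_const (softMin_mono hw) (softMin_add_const hα hw)

end SoftMin

section Bellman

variable {S A O : Type*} [Fintype S] [Fintype A] [Fintype O]

/-- The agent's value `V_Q(s, t)` of acting on the observation `t` in the state `s`, with an
arbitrary bonus `b t` in place of the entropy term `αent * H t`. -/
def observedValue (π : O → A → ℝ) (b : O → ℝ) (Q : S → A → ℝ) (s : S) (t : O) : ℝ :=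
  ∑ a, π t a * Q s a + b t

/-- The soft worst-case Bellman operator, with observations in a type `O` of their own: the
adversary's regularized choice of observation in the successor state is replaced by its optimal
value, a soft minimum weighted by the prior `p`. -/
noncomputable def softWorstBellman (F : S → A → S → ℝ) (p : S → O → ℝ) (π : O → A → ℝ)
    (b : O → ℝ) (r : S → A → ℝ) (γ α : ℝ) (Q : S → A → ℝ) (s : S) (a : A) : ℝ :=
  r s a + γ * ∑ s', F s a s' * softMin α (p s') (observedValue π b Q s')

theorem norm_observedValue_sub_le {π : O → A → ℝ} (hπ : ∀ t, ∑ a, |π t a| ≤ 1) (b : O → ℝ)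
    (Q₁ Q₂ : S → A → ℝ) (s : S) :
    ‖observedValue π b Q₁ s - observedValue π b Q₂ s‖ ≤ ‖Q₁ - Q₂‖ := by
  refine (pi_norm_le_iff_of_nonneg (norm_nonneg _)).2 fun t => ?_
  have sub_eq_average : (observedValue π b Q₁ s - observedValue π b Q₂ s) t =
      ∑ a, π t a * (Q₁ - Q₂) s a := by
    simp only [observedValue, Pi.sub_apply, mul_sub, Finset.sum_sub_distrib,
      add_sub_add_right_eq_sub]
  rw [sub_eq_average]
  exact abs_sum_mul_le_of_sum_abs_le_one (hπ t) (norm_nonneg _) fun a =>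
    (norm_le_pi_norm ((Q₁ - Q₂) s) a).trans (norm_le_pi_norm (Q₁ - Q₂) s)

theorem klSoftWorst_bellman_contraction_general {F : S → A → S → ℝ} {p : S → O → ℝ}
    {π : O → A → ℝ} (hF : ∀ s a, ∑ s', |F s a s'| ≤ 1) (hp : ∀ s, 0 < p s)
    (hπ : ∀ t, ∑ a, |π t a| ≤ 1) (b : O → ℝ) (r : S → A → ℝ) (γ : ℝ) {α : ℝ} (hα : α ≠ 0)
    (Q₁ Q₂ : S → A → ℝ) :
    ‖softWorstBellman F p π b r γ α Q₁ - softWorstBellman F p π b r γ α Q₂‖ ≤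
      |γ| * ‖Q₁ - Q₂‖ := by
  have softMin_sub_le (s : S) : |softMin α (p s) (observedValue π b Q₁ s) -
      softMin α (p s) (observedValue π b Q₂ s)| ≤ ‖Q₁ - Q₂‖ := by
    have := (lipschitzWith_softMin hα (hp s)).norm_sub_le
      (observedValue π b Q₁ s) (observedValue π b Q₂ s)
    rw [NNReal.coe_one, one_mul] at this
    exact this.trans (norm_observedValue_sub_le hπ b Q₁ Q₂ s)
  refine (pi_norm_le_iff_of_nonneg (by positivity)).2 fun s =>
    (pi_norm_le_iff_of_nonneg (by positivity)).2 fun a => ?_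
  simp only [Pi.sub_apply, softWorstBellman, add_sub_add_left_eq_sub, ← mul_sub,
    ← Finset.sum_sub_distrib, Real.norm_eq_abs, abs_mul]
  exact mul_le_mul_of_nonneg_left
    (abs_sum_mul_le_of_sum_abs_le_one (hF s a) (norm_nonneg _) softMin_sub_le) (abs_nonneg γ)

end Bellman

/-- Contraction property of the soft-worst (KL) Bellman operator
(the paper's Theorem 4.5). -/
theorem klSoftWorst_bellman_contraction
    {S A : Type*} [Fintype S] [Nonempty S] [Fintype A] [Nonempty A]
    (F : S → A → S → ℝ) (hF0 : ∀ s a s', 0 ≤ F s a s')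
    (hF1 : ∀ s a, ∑ s', F s a s' = 1)
    (p : S → S → ℝ) (hp0 : ∀ s t, 0 < p s t) (hp1 : ∀ s, ∑ t, p s t = 1)
    (π : S → A → ℝ) (hπ0 : ∀ t a, 0 ≤ π t a) (hπ1 : ∀ t, ∑ a, π t a = 1)
    (r : S → A → ℝ) (γ : ℝ) (hγ0 : 0 ≤ γ) (hγ1 : γ < 1)
    (αattk αent : ℝ) (hαattk : 0 < αattk)
    (H : S → ℝ) (hH : ∀ t, H t = -∑ a, π t a * Real.log (π t a))
    (V : (S → A → ℝ) → S → S → ℝ)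
    (hV : ∀ Q s t, V Q s t = (∑ a, π t a * Q s a) + αent * H t)
    (T : (S → A → ℝ) → S → A → ℝ)
    (hT : ∀ Q s a, T Q s a = r s a + γ * ∑ s', F s a s' *
      (-αattk * Real.log (∑ t, p s' t * Real.exp (-(V Q s' t) / αattk))))
    (Q₁ Q₂ : S → A → ℝ) :
    Finset.univ.sup' Finset.univ_nonempty
        (fun sa : S × A => |T Q₁ sa.1 sa.2 - T Q₂ sa.1 sa.2|) ≤
      γ * Finset.univ.sup' Finset.univ_nonempty
        (fun sa : S × A => |Q₁ sa.1 sa.2 - Q₂ sa.1 sa.2|) := by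
  have hT_eq : T = softWorstBellman F p π (fun t => αent * H t) r γ αattk := by
    funext Q s a
    simp only [hT, hV, softWorstBellman, softMin, observedValue]
  have contraction := klSoftWorst_bellman_contraction_general
    (F := F) (p := p) (π := π) (by simp [abs_of_nonneg, hF0, hF1])
    (fun s => Pi.lt_def.2 ⟨fun t => (hp0 s t).le, s, hp0 s s⟩) (by simp [abs_of_nonneg, hπ0, hπ1])
    (fun t => αent * H t) r γ hαattk.ne' Q₁ Q₂
  simpa only [← hT_eq, abs_of_nonneg hγ0, ← sup'_univ_norm_apply_eq_norm, Pi.sub_apply,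
    Real.norm_eq_abs] using contraction
end

section
/- Fix finite nonempty types S (states; the observation space is also S) and A (actions), a transition kernel F : S → A → S → ℝ with F s a s' ≥ 0 and ∑_{s'} F s a s' = 1 for all s, a; a perturbation prior p : S → S → ℝ with p s s̃ ≥ 0 and ∑_{s̃} p s s̃ = 1 for all s; a policy π : S → A → ℝ with π s̃ a ≥ 0 and ∑_a π s̃ a = 1 for all s̃; a reward r : S → A → ℝ; a discount factor γ with 0 ≤ γ < 1; a coefficient α_ent ∈ ℝ; a mixing weight κ with 0 ≤ κ ≤ 1; and a perturbation-set map B : S → Finset S with B s nonempty for every s. Define H(s̃) = −∑_a π s̃ a * Real.log (π s̃ a), and for Q : S → A → ℝ define V_Q(s, s̃) = ∑_a π s̃ a * Q s a + α_ent * H(s̃). Define the epsilon-worst Bellman operator by (T Q)(s, a) = r s a + γ * ∑_{s'} F s a s' * ( κ * (min over s̃ ∈ B s' of V_Q(s', s̃)) + (1 − κ) * ∑_{s̃} p s' s̃ * V_Q(s', s̃) ). Then T is a γ-contraction in sup norm: for all Q₁, Q₂ : S → A → ℝ, max_{(s,a)} |(T Q₁)(s,a) − (T Q₂)(s,a)|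 ≤ γ * max_{(s,a)} |Q₁(s,a) − Q₂(s,a)|. -/
/-!
Averages against weights of total mass at most one and minima over a finite set are nonexpansive
for the sup distance, hence so is their mixture with coefficients `κ` and `1 - κ`.
The reward and the entropy bonus do not depend on `Q`, so they cancel in a difference, and the
discount supplies the factor `γ`.
-/

section Nonexpansive

variable {ι R : Type*} [Ring R] [LinearOrder R] [IsOrderedRing R]

theorem abs_sum_mul_sub_sum_mul_le {s : Finset ι} {w f g : ι → R} {M : R}
    (hw0 : ∀ i ∈ s, 0 ≤ w i) (hw1 : ∑ i ∈ s, w i ≤ 1) (hM : 0 ≤ M)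
    (hfg : ∀ i ∈ s, |f i - g i| ≤ M) :
    |∑ i ∈ s, w i * f i - ∑ i ∈ s, w i * g i| ≤ M :=
  calc |∑ i ∈ s, w i * f i - ∑ i ∈ s, w i * g i|
      = |∑ i ∈ s, w i * (f i - g i)| := by simp only [mul_sub, Finset.sum_sub_distrib]
    _ ≤ ∑ i ∈ s, |w i * (f i - g i)| := Finset.abs_sum_le_sum_abs _ _
    _ ≤ ∑ i ∈ s, w i * M := Finset.sum_le_sum fun i hi => by
        rw [abs_mul, abs_of_nonneg (hw0 i hi)]
        exact mul_le_mul_of_nonneg_left (hfg i hi) (hw0 i hi)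
    _ = (∑ i ∈ s, w i) * M := (Finset.sum_mul _ _ _).symm
    _ ≤ M := mul_le_of_le_one_left hM hw1

theorem abs_convexComb_sub_convexComb_le {κ x₁ x₂ y₁ y₂ M : R} (hκ0 : 0 ≤ κ) (hκ1 : κ ≤ 1)
    (hx : |x₁ - x₂| ≤ M) (hy : |y₁ - y₂| ≤ M) :
    |(κ * x₁ + (1 - κ) * y₁) - (κ * x₂ + (1 - κ) * y₂)| ≤ M := by
  have hκ' : 0 ≤ 1 - κ := sub_nonneg.2 hκ1
  calc |(κ * x₁ + (1 - κ) * y₁) - (κ * x₂ + (1 - κ) * y₂)|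
      = |κ * (x₁ - x₂) + (1 - κ) * (y₁ - y₂)| := by
        rw [add_sub_add_comm, ← mul_sub, ← mul_sub]
    _ ≤ |κ * (x₁ - x₂)| + |(1 - κ) * (y₁ - y₂)| := abs_add_le _ _
    _ = κ * |x₁ - x₂| + (1 - κ) * |y₁ - y₂| := by
        rw [abs_mul, abs_mul, abs_of_nonneg hκ0, abs_of_nonneg hκ']
    _ ≤ κ * M + (1 - κ) * M := by gcongr
    _ = M := by rw [← add_mul, add_sub_cancel, one_mul]

end Nonexpansive

section Minimum

variable {ι G : Type*} [AddCommGroup G] [LinearOrder G] [IsOrderedAddMonoid G]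

theorem inf'_sub_inf'_le {s : Finset ι} (hs : s.Nonempty) {f g : ι → G} {M : G}
    (hfg : ∀ i ∈ s, f i - g i ≤ M) : s.inf' hs f - s.inf' hs g ≤ M := by
  obtain ⟨i, hi, hgi⟩ := s.exists_mem_eq_inf' hs g
  calc s.inf' hs f - s.inf' hs g
      = s.inf' hs f - g i := by rw [hgi]
    _ ≤ f i - g i := sub_le_sub_right (s.inf'_le f hi) _
    _ ≤ M := hfg i hi

theorem abs_inf'_sub_inf'_le {s : Finset ι} (hs : s.Nonempty) {f g : ι → G} {M : G}
    (hfg : ∀ i ∈ s, |f i - g i| ≤ M) : |s.inf' hs f - s.inf' hs g| ≤ M :=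
  abs_sub_le_iff.2
    ⟨inf'_sub_inf'_le hs fun i hi => (abs_sub_le_iff.1 (hfg i hi)).1,
      inf'_sub_inf'_le hs fun i hi => (abs_sub_le_iff.1 (hfg i hi)).2⟩

end Minimum

section Bellman

variable {S O A R : Type*} [Fintype A] [Ring R]

/-- The value `V_Q(s, t)` of acting in state `s` by the policy `π` on the perturbed observation `t`.
The regularizer `Ω` plays the role of `α_ent * H`; observations need not be states. -/
def regularizedValue (π : O → A → R) (Ω : O → R) (Q : S → A → R) (s : S) (t : O) : R :=
  ∑ a, π t a * Q s a + Ω t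

variable [LinearOrder R]

theorem abs_regularizedValue_sub_le [IsOrderedRing R] {π : O → A → R} {t : O}
    (hπ0 : ∀ a, 0 ≤ π t a) (hπ1 : ∑ a, π t a ≤ 1) (Ω : O → R) {Q₁ Q₂ : S → A → R} {s : S} {M : R}
    (hM : 0 ≤ M) (hQ : ∀ a, |Q₁ s a - Q₂ s a| ≤ M) :
    |regularizedValue π Ω Q₁ s t - regularizedValue π Ω Q₂ s t| ≤ M := by
  simp only [regularizedValue, add_sub_add_right_eq_sub]
  exact abs_sum_mul_sub_sum_mul_le (fun a _ => hπ0 a) hπ1 hM fun a _ => hQ a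

variable [Fintype O]

/-- The expected value of `v` under the epsilon-worst adversary, which picks the worst observation
in `U` with weight `κ` and otherwise draws the observation from the prior `q`. -/
def epsilonWorstValue (κ : R) (q : O → R) (U : Finset O) (hU : U.Nonempty) (v : O → R) : R :=
  κ * U.inf' hU v + (1 - κ) * ∑ t, q t * v t

theorem abs_epsilonWorstValue_sub_le [IsOrderedRing R] {κ : R} (hκ0 : 0 ≤ κ) (hκ1 : κ ≤ 1)
    {q : O → R} (hq0 : ∀ t, 0 ≤ q t) (hq1 : ∑ t, q t ≤ 1) {U : Finset O} (hU : U.Nonempty)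
    {v₁ v₂ : O → R} {M : R} (hM : 0 ≤ M) (hv : ∀ t, |v₁ t - v₂ t| ≤ M) :
    |epsilonWorstValue κ q U hU v₁ - epsilonWorstValue κ q U hU v₂| ≤ M :=
  abs_convexComb_sub_convexComb_le hκ0 hκ1
    (abs_inf'_sub_inf'_le hU fun t _ => hv t)
    (abs_sum_mul_sub_sum_mul_le (fun t _ => hq0 t) hq1 hM fun t _ => hv t)

variable [Fintype S]

/-- The Bellman operator of the policy `π` facing the epsilon-worst adversary, with transition
kernel `F`, reward `r`, discount `γ`, prior `p` and perturbation sets `B`. -/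
def epsilonWorstBellman (F : S → A → S → R) (p : S → O → R) (π : O → A → R) (r : S → A → R)
    (γ : R) (Ω : O → R) (κ : R) (B : S → Finset O) (hB : ∀ s, (B s).Nonempty)
    (Q : S → A → R) (s : S) (a : A) : R :=
  r s a + γ * ∑ s', F s a s' *
    epsilonWorstValue κ (p s') (B s') (hB s') (regularizedValue π Ω Q s')

variable [IsOrderedRing R]

theorem abs_epsilonWorstBellman_sub_le
    {F : S → A → S → R} (hF0 : ∀ s a s', 0 ≤ F s a s') (hF1 : ∀ s a, ∑ s', F s a s' ≤ 1)
    {p : S → O → R} (hp0 : ∀ s t, 0 ≤ p s t) (hp1 : ∀ s, ∑ t, p s t ≤ 1)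
    {π : O → A → R} (hπ0 : ∀ t a, 0 ≤ π t a) (hπ1 : ∀ t, ∑ a, π t a ≤ 1)
    (r : S → A → R) {γ : R} (hγ0 : 0 ≤ γ) (Ω : O → R) {κ : R} (hκ0 : 0 ≤ κ) (hκ1 : κ ≤ 1)
    {B : S → Finset O} (hB : ∀ s, (B s).Nonempty) {Q₁ Q₂ : S → A → R} {M : R}
    (hM : 0 ≤ M) (hQ : ∀ s a, |Q₁ s a - Q₂ s a| ≤ M) (s : S) (a : A) :
    |epsilonWorstBellman F p π r γ Ω κ B hB Q₁ s a -
      epsilonWorstBellman F p π r γ Ω κ B hB Q₂ s a| ≤ γ * M := by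
  simp only [epsilonWorstBellman, add_sub_add_left_eq_sub]
  rw [← mul_sub, abs_mul, abs_of_nonneg hγ0]
  refine mul_le_mul_of_nonneg_left ?_ hγ0
  refine abs_sum_mul_sub_sum_mul_le (fun s' _ => hF0 s a s') (hF1 s a) hM fun s' _ => ?_
  exact abs_epsilonWorstValue_sub_le hκ0 hκ1 (hp0 s') (hp1 s') (hB s') hM fun t =>
    abs_regularizedValue_sub_le (hπ0 t) (hπ1 t) Ω hM (hQ s')

theorem epsilonWorst_bellman_contraction_general [Nonempty S] [Nonempty A]
    {F : S → A → S → R} (hF0 : ∀ s a s', 0 ≤ F s a s') (hF1 : ∀ s a, ∑ s', F s a s' ≤ 1)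
    {p : S → O → R} (hp0 : ∀ s t, 0 ≤ p s t) (hp1 : ∀ s, ∑ t, p s t ≤ 1)
    {π : O → A → R} (hπ0 : ∀ t a, 0 ≤ π t a) (hπ1 : ∀ t, ∑ a, π t a ≤ 1)
    (r : S → A → R) {γ : R} (hγ0 : 0 ≤ γ) (Ω : O → R) {κ : R} (hκ0 : 0 ≤ κ) (hκ1 : κ ≤ 1)
    {B : S → Finset O} (hB : ∀ s, (B s).Nonempty) (Q₁ Q₂ : S → A → R) :
    Finset.univ.sup' Finset.univ_nonempty
        (fun sa : S × A => |epsilonWorstBellman F p π r γ Ω κ B hB Q₁ sa.1 sa.2 -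
          epsilonWorstBellman F p π r γ Ω κ B hB Q₂ sa.1 sa.2|) ≤
      γ * Finset.univ.sup' Finset.univ_nonempty
        (fun sa : S × A => |Q₁ sa.1 sa.2 - Q₂ sa.1 sa.2|) := by
  set M := Finset.univ.sup' Finset.univ_nonempty
    (fun sa : S × A => |Q₁ sa.1 sa.2 - Q₂ sa.1 sa.2|)
  have hQ (s : S) (a : A) : |Q₁ s a - Q₂ s a| ≤ M :=
    Finset.le_sup' (fun sa : S × A => |Q₁ sa.1 sa.2 - Q₂ sa.1 sa.2|) (Finset.mem_univ (s, a))
  have hM : 0 ≤ M := (abs_nonneg _).trans (hQ (Classical.arbitrary S) (Classical.arbitrary A))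
  exact Finset.sup'_le _ _ fun sa _ =>
    abs_epsilonWorstBellman_sub_le hF0 hF1 hp0 hp1 hπ0 hπ1 r hγ0 Ω hκ0 hκ1 hB hM hQ sa.1 sa.2

end Bellman

/-- Contraction property of the epsilon-worst Bellman operator
(the paper's Theorem 4.9). -/
theorem epsilonWorst_bellman_contraction
    {S A : Type*} [Fintype S] [Nonempty S] [Fintype A] [Nonempty A]
    (F : S → A → S → ℝ) (hF0 : ∀ s a s', 0 ≤ F s a s')
    (hF1 : ∀ s a, ∑ s', F s a s' = 1)
    (p : S → S → ℝ) (hp0 : ∀ s t, 0 ≤ p s t) (hp1 : ∀ s, ∑ t, p s t = 1)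
    (π : S → A → ℝ) (hπ0 : ∀ t a, 0 ≤ π t a) (hπ1 : ∀ t, ∑ a, π t a = 1)
    (r : S → A → ℝ) (γ : ℝ) (hγ0 : 0 ≤ γ) (hγ1 : γ < 1)
    (αent : ℝ) (κ : ℝ) (hκ0 : 0 ≤ κ) (hκ1 : κ ≤ 1)
    (B : S → Finset S) (hB : ∀ s, (B s).Nonempty)
    (H : S → ℝ) (hH : ∀ t, H t = -∑ a, π t a * Real.log (π t a))
    (V : (S → A → ℝ) → S → S → ℝ)
    (hV : ∀ Q s t, V Q s t = (∑ a, π t a * Q s a) + αent * H t)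
    (T : (S → A → ℝ) → S → A → ℝ)
    (hT : ∀ Q s a, T Q s a = r s a + γ * ∑ s', F s a s' *
      (κ * (B s').inf' (hB s') (fun t => V Q s' t) +
        (1 - κ) * ∑ t, p s' t * V Q s' t))
    (Q₁ Q₂ : S → A → ℝ) :
    Finset.univ.sup' Finset.univ_nonempty
        (fun sa : S × A => |T Q₁ sa.1 sa.2 - T Q₂ sa.1 sa.2|) ≤
      γ * Finset.univ.sup' Finset.univ_nonempty
        (fun sa : S × A => |Q₁ sa.1 sa.2 - Q₂ sa.1 sa.2|) := by
  obtain rfl : V = regularizedValue π (fun t => αent * H t) := funext₃ hV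
  obtain rfl : T = epsilonWorstBellman F p π r γ (fun t => αent * H t) κ B hB := funext₃ hT
  exact epsilonWorst_bellman_contraction_general hF0 (fun s a => (hF1 s a).le) hp0
    (fun s => (hp1 s).le) hπ0 (fun t => (hπ1 t).le) r hγ0 _ hκ0 hκ1 hB Q₁ Q₂
end

section
/- Fix finite nonempty types S and A, a transition kernel F : S → A → S → ℝ with F s a s' ≥ 0 and ∑_{s'} F s a s' = 1; a perturbation prior p : S → S → ℝ with p s s̃ > 0 and ∑_{s̃} p s s̃ = 1; a policy π : S → A → ℝ with π s̃ a ≥ 0 and ∑_a π s̃ a = 1; a reward r : S → A → ℝ; γ with 0 ≤ γ < 1; α_attk > 0; α_ent ∈ ℝ; and f : ℝ → ℝ convex with f 1 = 0. Define H(s̃) = −∑_a π s̃ a * Real.log (π s̃ a); for Q : S → A → ℝ, V_Q(s, s̃) = ∑_a π s̃ a * Q s a + α_ent * H(s̃); the soft-worst functional W_s(v) = ⨅ over probability vectors ν on S of ( ∑_{s̃} ν s̃ * v s̃ + α_attk * ∑_{s̃} p s s̃ * f (ν s̃ / p s s̃) ); the agent operator (T_ag Q)(s, a) = r s a + γ *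 ∑_{s'} F s a s' * W_{s'}(V_Q(s', ·)); the adversary reward c(s, s̃) = ∑_a π s̃ a * (−r s a); the policy-averaged transition G(s, s̃, s') = ∑_a π s̃ a * F s a s'; the soft-best functional M_s(u) = ⨆ over probability vectors ν on S of ( ∑_{s̃} ν s̃ * u s̃ − α_attk * ∑_{s̃} p s s̃ * f (ν s̃ / p s s̃) ); and the adversary operator (T_adv Q)(s, s̃) = c(s, s̃) + γ * ∑_{s'} G(s, s̃, s') * M_{s'}( fun s̃' => Q s' s̃' − α_ent * H(s̃') ) for Q : S → S → ℝ. Suppose Q_ag : S → A → ℝ and Q_adv : S → S → ℝ satisfy Q_adv(s, s̃) = ∑_a π s̃ a * (−Q_ag(s, a)) for all s, s̃. Then for all s, s̃: (T_adv Q_adv)(s, s̃) = ∑_a π s̃ a * (−(T_ag Q_ag)(s, a)). -/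
/-!
Negation exchanges the soft-worst value (an infimum of linear payoff plus penalty over the simplex)
with the soft-best value (the supremum of negated payoff minus penalty), and everything else in the
two Bellman operators is linear: averaging over the policy commutes with negation and with averaging
over transitions.
-/

section Values

variable {S : Type*} [Fintype S]

/-- The soft-worst value of `v`: a perturbation distribution minimises the mean of `v` plus the
penalty `Ω`. It is meaningful when `Ω` is bounded below on the simplex. -/
noncomputable def softWorst (Ω : (S → ℝ) → ℝ) (v : S → ℝ) : ℝ :=
  ⨅ ν : stdSimplex ℝ S, (ν.1 ⬝ᵥ v + Ω ν)

/-- The soft-best value of `u`: a perturbation distribution maximises the mean of `u` minus the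
penalty `Ω`. It is meaningful when `Ω` is bounded below on the simplex. -/
noncomputable def softBest (Ω : (S → ℝ) → ℝ) (u : S → ℝ) : ℝ :=
  ⨆ ν : stdSimplex ℝ S, (ν.1 ⬝ᵥ u - Ω ν)

/-- The `f`-divergence of `ν` from a reference vector `p` with positive entries. Where `p t = 0` the
summand is `0`, unlike in the usual extension of the `f`-divergence. -/
noncomputable def fDivergence (f : ℝ → ℝ) (p ν : S → ℝ) : ℝ :=
  ∑ t, p t * f (ν t / p t)

lemma continuous_fDivergence {f : ℝ → ℝ} (hf : Continuous f) (p : S → ℝ) :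
    Continuous (fDivergence f p) := by
  unfold fDivergence
  fun_prop

lemma bddBelow_image_const_mul_fDivergence {f : ℝ → ℝ} (hf : Continuous f) (p : S → ℝ) (c : ℝ) :
    BddBelow ((fun ν ↦ c * fDivergence f p ν) '' stdSimplex ℝ S) :=
  ((isCompact_stdSimplex ℝ S).image
    (continuous_const.mul (continuous_fDivergence hf p))).bddBelow

lemma bddBelow_range_dotProduct_add {Ω : (S → ℝ) → ℝ} (hΩ : BddBelow (Ω '' stdSimplex ℝ S))
    (v : S → ℝ) : BddBelow (Set.range fun ν : stdSimplex ℝ S ↦ ν.1 ⬝ᵥ v + Ω ν) := by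
  have pairing_continuous : Continuous fun ν : S → ℝ ↦ ν ⬝ᵥ v := by fun_prop
  obtain ⟨m, hm⟩ := ((isCompact_stdSimplex ℝ S).image pairing_continuous).bddBelow
  obtain ⟨k, hk⟩ := hΩ
  refine ⟨m + k, Set.forall_mem_range.2 fun ν ↦ ?_⟩
  exact add_le_add (hm (Set.mem_image_of_mem _ ν.2)) (hk (Set.mem_image_of_mem _ ν.2))

lemma softBest_neg [Nonempty S] {Ω : (S → ℝ) → ℝ} (hΩ : BddBelow (Ω '' stdSimplex ℝ S))
    (v : S → ℝ) : softBest Ω (-v) = -softWorst Ω v := by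
  calc softBest Ω (-v) = ⨆ ν : stdSimplex ℝ S, -(ν.1 ⬝ᵥ v + Ω ν) := by
        simp only [softBest, dotProduct_neg, neg_add, sub_eq_add_neg]
    _ = -softWorst Ω v :=
        ((OrderIso.neg ℝ).map_ciInf (bddBelow_range_dotProduct_add hΩ v)).symm

end Values

section Bellman

open Matrix

variable {S A : Type*} [Fintype S] [Fintype A]

/-- The agent's soft-worst Bellman operator, where `F s` is the matrix of transition weights out of
`s`, `b` is the policy's bonus in each perceived state and `Ω s` penalises perturbing `s`. -/
noncomputable def agentBellman (F : S → Matrix A S ℝ) (π r : S → A → ℝ) (γ : ℝ) (b : S → ℝ)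
    (Ω : S → (S → ℝ) → ℝ) (Q : S → A → ℝ) (s : S) : A → ℝ :=
  r s + γ • (F s *ᵥ fun s' ↦ softWorst (Ω s') fun t ↦ π t ⬝ᵥ Q s' + b t)

/-- The adversary's soft-optimal Bellman operator: its actions are perceived states, its reward is
the policy average of `-r`, its transition weights are the policy averages `π t ᵥ* F s`, and it pays
the agent's bonus `b`. -/
noncomputable def adversaryBellman (F : S → Matrix A S ℝ) (π r : S → A → ℝ) (γ : ℝ) (b : S → ℝ)
    (Ω : S → (S → ℝ) → ℝ) (Q : S → S → ℝ) (s t : S) : ℝ :=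
  π t ⬝ᵥ -r s + γ * ((π t ᵥ* F s) ⬝ᵥ fun s' ↦ softBest (Ω s') fun t' ↦ Q s' t' - b t')

theorem valt_operator_intertwining_general (F : S → Matrix A S ℝ) (π r : S → A → ℝ) (γ : ℝ)
    (b : S → ℝ) {Ω : S → (S → ℝ) → ℝ} (hΩ : ∀ s, BddBelow (Ω s '' stdSimplex ℝ S))
    (Q : S → A → ℝ) (s t : S) :
    adversaryBellman F π r γ b Ω (fun s' t' ↦ π t' ⬝ᵥ -Q s') s t =
      π t ⬝ᵥ -agentBellman F π r γ b Ω Q s := by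
  have : Nonempty S := ⟨s⟩
  let w : S → ℝ := fun s' ↦ softWorst (Ω s') fun t' ↦ π t' ⬝ᵥ Q s' + b t'
  have softBest_eq : (fun s' ↦ softBest (Ω s') fun t' ↦ π t' ⬝ᵥ -Q s' - b t') = -w := by
    ext s'
    rw [Pi.neg_apply, ← softBest_neg (hΩ s')]
    congr 1
    ext t'
    rw [Pi.neg_apply, dotProduct_neg, neg_add']
  calc adversaryBellman F π r γ b Ω (fun s' t' ↦ π t' ⬝ᵥ -Q s') s t
      = π t ⬝ᵥ -r s + γ * ((π t ᵥ* F s) ⬝ᵥ -w) := by rw [adversaryBellman, softBest_eq]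
    _ = π t ⬝ᵥ -r s + γ * (π t ⬝ᵥ -(F s *ᵥ w)) := by rw [← dotProduct_mulVec, mulVec_neg]
    _ = π t ⬝ᵥ -(r s + γ • (F s *ᵥ w)) := by
        rw [neg_add, dotProduct_add, ← smul_neg, dotProduct_smul, smul_eq_mul]

end Bellman

/-- Operator-intertwining identity at the core of the paper's Theorem 3.3:
when the adversary's action-value function is the policy-expectation of the
negated agent action-value function, applying the adversary's soft-optimal
Bellman operator agrees with negating and policy-averaging the agent's
soft-worst Bellman operator. -/
theorem valt_operator_intertwining
    {S A : Type*} [Fintype S] [Nonempty S] [Fintype A] [Nonempty A]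
    (F : S → A → S → ℝ) (hF0 : ∀ s a s', 0 ≤ F s a s')
    (hF1 : ∀ s a, ∑ s', F s a s' = 1)
    (p : S → S → ℝ) (hp0 : ∀ s t, 0 < p s t) (hp1 : ∀ s, ∑ t, p s t = 1)
    (π : S → A → ℝ) (hπ0 : ∀ t a, 0 ≤ π t a) (hπ1 : ∀ t, ∑ a, π t a = 1)
    (r : S → A → ℝ) (γ : ℝ) (hγ0 : 0 ≤ γ) (hγ1 : γ < 1)
    (αattk αent : ℝ) (hαattk : 0 < αattk)
    (f : ℝ → ℝ) (hf : ConvexOn ℝ Set.univ f) (hf1 : f 1 = 0)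
    (H : S → ℝ) (hH : ∀ t, H t = -∑ a, π t a * Real.log (π t a))
    (V : (S → A → ℝ) → S → S → ℝ)
    (hV : ∀ Q s t, V Q s t = (∑ a, π t a * Q s a) + αent * H t)
    (W : S → (S → ℝ) → ℝ)
    (hW : ∀ s v, W s v =
      ⨅ ν : {w : S → ℝ // (∀ t, 0 ≤ w t) ∧ ∑ t, w t = 1},
        ((∑ t, ν.1 t * v t) + αattk * ∑ t, p s t * f (ν.1 t / p s t)))
    (Tag : (S → A → ℝ) → S → A → ℝ)
    (hTag : ∀ Q s a, Tag Q s a =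
      r s a + γ * ∑ s', F s a s' * W s' (fun t => V Q s' t))
    (c : S → S → ℝ) (hc : ∀ s t, c s t = ∑ a, π t a * (-r s a))
    (G : S → S → S → ℝ) (hG : ∀ s t s', G s t s' = ∑ a, π t a * F s a s')
    (M : S → (S → ℝ) → ℝ)
    (hM : ∀ s u, M s u =
      ⨆ ν : {w : S → ℝ // (∀ t, 0 ≤ w t) ∧ ∑ t, w t = 1},
        ((∑ t, ν.1 t * u t) - αattk * ∑ t, p s t * f (ν.1 t / p s t)))
    (Tadv : (S → S → ℝ) → S → S → ℝ)
    (hTadv : ∀ Q s t, Tadv Q s t = c s t + γ * ∑ s', G s t s' *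
      M s' (fun t' => Q s' t' - αent * H t'))
    (Qag : S → A → ℝ) (Qadv : S → S → ℝ)
    (hlink : ∀ s t, Qadv s t = ∑ a, π t a * (-Qag s a)) :
    ∀ s t, Tadv Qadv s t = ∑ a, π t a * (-(Tag Qag s a)) := by
  have hf_cont : Continuous f := continuousOn_univ.1 (hf.continuousOn isOpen_univ)
  simp only [hTadv, hc, hG, hM, hlink, hTag, hW, hV]
  exact valt_operator_intertwining_general F π r γ (fun t ↦ αent * H t)
    (fun s ↦ bddBelow_image_const_mul_fDivergence hf_cont (p s) αattk) Qag
end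

section
/- Fix finite nonempty types S and A, a transition kernel F : S → A → S → ℝ with F s a s' ≥ 0 and ∑_{s'} F s a s' = 1; a fixed adversary kernel ν : S → S → ℝ with ν s s̃ ≥ 0 and ∑_{s̃} ν s s̃ = 1; a reward r : S → A → ℝ; γ with 0 ≤ γ < 1; and α_ent ≥ 0. For a policy ρ : S → A → ℝ with ρ s̃ a ≥ 0 and ∑_a ρ s̃ a = 1, write H_ρ(s̃) = −∑_a ρ s̃ a * Real.log (ρ s̃ a) and define the fixed-adversary Bellman operator (T_ρ Q)(s, a) = r s a + γ * ∑_{s'} F s a s' * ∑_{s̃} ν s' s̃ * ( ∑_{a'} ρ s̃ a' * Q s' a' + α_ent * H_ρ(s̃) ). Let π and π̂ be two such policies, and suppose Q₁ : S → A → ℝ satisfies T_π Q₁ = Q₁, Q₂ : S → A → ℝ satisfies T_{π̂} Q₂ = Q₂, and the improvement condition holds: for every s, ∑_{s̃} ν s s̃ * ( α_ent * H_{π̂}(s̃) + ∑_a π̂ s̃ a * Q₁ s a ) ≥ ∑_{s̃} ν s s̃ * ( α_ent * H_π(s̃) + ∑_a π s̃ a * Q₁ s a ). Then Q₂ s a ≥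 Q₁ s a for all s and a. -/
/-!
By the improvement condition `Q₁` is a subsolution of the Bellman operator of the new policy, of
which `Q₂` is a fixed point. That operator is monotone and shrinks constant shifts by the factor
`γ`, so any bound `Q₁ ≤ Q₂ + c` with `0 < c` improves itself to `Q₁ ≤ Q₂ + γ * c`. Taking for `c`
the largest excess of `Q₁` over `Q₂` shows that this excess is not positive.
-/

theorem sum_mul_le_sum_mul_add {ι R : Type*} [Semiring R] [PartialOrder R] [IsOrderedRing R]
    {s : Finset ι} {w f g : ι → R} {c : R} (hw : ∀ i ∈ s, 0 ≤ w i) (hw1 : ∑ i ∈ s, w i ≤ 1)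
    (hc : 0 ≤ c) (h : ∀ i ∈ s, f i ≤ g i + c) :
    ∑ i ∈ s, w i * f i ≤ ∑ i ∈ s, w i * g i + c :=
  calc
    ∑ i ∈ s, w i * f i ≤ ∑ i ∈ s, w i * (g i + c) :=
      Finset.sum_le_sum fun i hi => mul_le_mul_of_nonneg_left (h i hi) (hw i hi)
    _ = ∑ i ∈ s, w i * g i + (∑ i ∈ s, w i) * c := by
      simp only [mul_add, Finset.sum_add_distrib, Finset.sum_mul]
    _ ≤ ∑ i ∈ s, w i * g i + c := by
      gcongr
      exact mul_le_of_le_one_left hc hw1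

theorem le_of_forall_le_add_imp_le_add_mul {X : Type*} {f g : X → ℝ} {γ : ℝ} (hγ : γ < 1)
    (hbdd : BddAbove (Set.range fun x => f x - g x))
    (h : ∀ c, 0 < c → (∀ x, f x ≤ g x + c) → ∀ x, f x ≤ g x + γ * c) (x : X) :
    f x ≤ g x := by
  have : Nonempty X := ⟨x⟩
  set M := ⨆ y, (f y - g y)
  have hfg (y : X) : f y ≤ g y + M := sub_le_iff_le_add'.mp (le_ciSup hbdd y)
  suffices hM : M ≤ 0 from (hfg x).trans (add_le_of_nonpos_right hM)
  by_contra! hM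
  have hself : M ≤ γ * M := ciSup_le fun y => sub_le_iff_le_add'.mpr (h M hM hfg y)
  exact hself.not_gt (mul_lt_of_lt_one_left hM hγ)

section Bellman

variable {S O A : Type*}

/-- The regularized value at the state `s` of acting once by the policy `ρ` and then collecting `Q`,
where the policy sees an observation drawn by the adversary from `ν s`, while `Q` is evaluated at
the true state. The regularizer `Ω` is a function of the action weights; for entropy
regularization it is the multiple `αent` of the Shannon entropy. -/
def adversarialValue [Fintype O] [Fintype A] (ν : S → O → ℝ) (Ω : (A → ℝ) → ℝ) (ρ : O → A → ℝ)
    (Q : S → A → ℝ) (s : S) : ℝ :=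
  ∑ t, ν s t * ((∑ a, ρ t a * Q s a) + Ω (ρ t))

/-- The one-step backup of a state value `V`: the reward plus the discounted mean of `V` at the next
state. It is kept apart from `adversarialValue` because only the latter depends on the policy. -/
def bellmanBackup [Fintype S] (F : S → A → S → ℝ) (r : S → A → ℝ) (γ : ℝ) (V : S → ℝ)
    (s : S) (a : A) : ℝ :=
  r s a + γ * ∑ s', F s a s' * V s'

/-- The Bellman operator of the policy `ρ` on action-value functions, under the fixed adversary `ν`
and the regularizer `Ω`. -/
def adversarialBellman [Fintype S] [Fintype O] [Fintype A] (F : S → A → S → ℝ)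
    (ν : S → O → ℝ) (r : S → A → ℝ) (γ : ℝ) (Ω : (A → ℝ) → ℝ) (ρ : O → A → ℝ)
    (Q : S → A → ℝ) : S → A → ℝ :=
  bellmanBackup F r γ (adversarialValue ν Ω ρ Q)

theorem adversarialValue_le_add [Fintype O] [Fintype A] {ν : S → O → ℝ} {Ω : (A → ℝ) → ℝ}
    {ρ : O → A → ℝ} {Q Q' : S → A → ℝ} {c : ℝ} {s : S} (hν0 : ∀ t, 0 ≤ ν s t)
    (hν1 : ∑ t, ν s t ≤ 1) (hρ0 : ∀ t a, 0 ≤ ρ t a) (hρ1 : ∀ t, ∑ a, ρ t a ≤ 1) (hc : 0 ≤ c)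
    (h : ∀ a, Q s a ≤ Q' s a + c) :
    adversarialValue ν Ω ρ Q s ≤ adversarialValue ν Ω ρ Q' s + c := by
  refine sum_mul_le_sum_mul_add (fun t _ => hν0 t) hν1 hc fun t _ => ?_
  rw [add_right_comm]
  gcongr
  exact sum_mul_le_sum_mul_add (fun a _ => hρ0 t a) (hρ1 t) hc fun a _ => h a

theorem bellmanBackup_mono [Fintype S] {F : S → A → S → ℝ} {r : S → A → ℝ} {γ : ℝ} {V V' : S → ℝ}
    {s : S} {a : A} (hF0 : ∀ s', 0 ≤ F s a s') (hγ : 0 ≤ γ) (h : ∀ s', V s' ≤ V' s') :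
    bellmanBackup F r γ V s a ≤ bellmanBackup F r γ V' s a := by
  unfold bellmanBackup
  gcongr with s'
  exacts [hF0 s', h s']

theorem bellmanBackup_le_add_mul [Fintype S] {F : S → A → S → ℝ} {r : S → A → ℝ} {γ : ℝ}
    {V V' : S → ℝ} {c : ℝ} {s : S} {a : A} (hF0 : ∀ s', 0 ≤ F s a s') (hF1 : ∑ s', F s a s' ≤ 1)
    (hγ : 0 ≤ γ) (hc : 0 ≤ c) (h : ∀ s', V s' ≤ V' s' + c) :
    bellmanBackup F r γ V s a ≤ bellmanBackup F r γ V' s a + γ * c := by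
  unfold bellmanBackup
  rw [add_assoc, ← mul_add]
  gcongr
  exact sum_mul_le_sum_mul_add (fun s' _ => hF0 s') hF1 hc fun s' _ => h s'

theorem policy_improvement_with_fixed_adversary_general [Fintype S] [Fintype O] [Fintype A]
    {F : S → A → S → ℝ} (hF0 : ∀ s a s', 0 ≤ F s a s') (hF1 : ∀ s a, ∑ s', F s a s' ≤ 1)
    {ν : S → O → ℝ} (hν0 : ∀ s t, 0 ≤ ν s t) (hν1 : ∀ s, ∑ t, ν s t ≤ 1)
    {r : S → A → ℝ} {γ : ℝ} (hγ0 : 0 ≤ γ) (hγ1 : γ < 1) {Ω : (A → ℝ) → ℝ}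
    {π πh : O → A → ℝ} (hπh0 : ∀ t a, 0 ≤ πh t a) (hπh1 : ∀ t, ∑ a, πh t a ≤ 1)
    {Q₁ Q₂ : S → A → ℝ} (hQ₁ : Q₁ ≤ adversarialBellman F ν r γ Ω π Q₁)
    (hQ₂ : adversarialBellman F ν r γ Ω πh Q₂ ≤ Q₂)
    (himpr : ∀ s, adversarialValue ν Ω π Q₁ s ≤ adversarialValue ν Ω πh Q₁ s) (s : S) (a : A) :
    Q₁ s a ≤ Q₂ s a := by
  have hsub (s : S) (a : A) : Q₁ s a ≤ adversarialBellman F ν r γ Ω πh Q₁ s a :=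
    (hQ₁ s a).trans (bellmanBackup_mono (hF0 s a) hγ0 himpr)
  have hself (c : ℝ) (hc : 0 < c) (h : ∀ x : S × A, Q₁ x.1 x.2 ≤ Q₂ x.1 x.2 + c) :
      ∀ x : S × A, Q₁ x.1 x.2 ≤ Q₂ x.1 x.2 + γ * c := fun (s, a) =>
    calc
      Q₁ s a ≤ adversarialBellman F ν r γ Ω πh Q₁ s a := hsub s a
      _ ≤ adversarialBellman F ν r γ Ω πh Q₂ s a + γ * c :=
        bellmanBackup_le_add_mul (hF0 s a) (hF1 s a) hγ0 hc.le fun s' =>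
          adversarialValue_le_add (hν0 s') (hν1 s') hπh0 hπh1 hc.le fun a' => h (s', a')
      _ ≤ Q₂ s a + γ * c := by
        gcongr
        exact hQ₂ s a
  exact le_of_forall_le_add_imp_le_add_mul hγ1 (Set.finite_range _).bddAbove hself (s, a)

end Bellman

/-- The paper's Theorem 4.7 (Policy Improvement Theorem with a Fixed
Adversary): if the new policy π̂ does not decrease the entropy-regularized
one-step value of the old policy's action-value function under the fixed
adversary ν, then the fixed-point action-value function of π̂ dominates that of
π pointwise. -/
theorem policy_improvement_with_fixed_adversary
    {S A : Type*} [Fintype S] [Nonempty S] [Fintype A] [Nonempty A]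
    (F : S → A → S → ℝ) (hF0 : ∀ s a s', 0 ≤ F s a s')
    (hF1 : ∀ s a, ∑ s', F s a s' = 1)
    (ν : S → S → ℝ) (hν0 : ∀ s t, 0 ≤ ν s t) (hν1 : ∀ s, ∑ t, ν s t = 1)
    (r : S → A → ℝ) (γ : ℝ) (hγ0 : 0 ≤ γ) (hγ1 : γ < 1)
    (αent : ℝ) (hαent : 0 ≤ αent)
    (T : (S → A → ℝ) → (S → A → ℝ) → S → A → ℝ)
    (hT : ∀ ρ Q s a, T ρ Q s a = r s a + γ * ∑ s', F s a s' * ∑ t, ν s' t *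
      ((∑ a', ρ t a' * Q s' a') +
        αent * (-∑ a', ρ t a' * Real.log (ρ t a'))))
    (π : S → A → ℝ) (hπ0 : ∀ t a, 0 ≤ π t a) (hπ1 : ∀ t, ∑ a, π t a = 1)
    (πh : S → A → ℝ) (hπh0 : ∀ t a, 0 ≤ πh t a) (hπh1 : ∀ t, ∑ a, πh t a = 1)
    (Q₁ : S → A → ℝ) (hQ₁ : T π Q₁ = Q₁)
    (Q₂ : S → A → ℝ) (hQ₂ : T πh Q₂ = Q₂)
    (himpr : ∀ s,
      ∑ t, ν s t * (αent * (-∑ a, πh t a * Real.log (πh t a)) +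
        ∑ a, πh t a * Q₁ s a) ≥
      ∑ t, ν s t * (αent * (-∑ a, π t a * Real.log (π t a)) +
        ∑ a, π t a * Q₁ s a)) :
    ∀ s a, Q₁ s a ≤ Q₂ s a := by
  obtain rfl : T = adversarialBellman F ν r γ
      fun p => αent * (-∑ a, p a * Real.log (p a)) := by
    funext ρ Q s a
    exact hT ρ Q s a
  refine policy_improvement_with_fixed_adversary_general hF0 (fun s a => (hF1 s a).le) hν0
    (fun s => (hν1 s).le) hγ0 hγ1 hπh0 (fun t => (hπh1 t).le) hQ₁.ge hQ₂.le fun s => ?_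
  simpa only [adversarialValue, add_comm] using himpr s
end

section
/- Let α : ℝ with α ≠ 0 and α ≠ 1, and for x > 0 define the α-divergence generator f_α(x) = ((x^α − 1) − α*(x − 1)) / (α*(α − 1)), where x^α denotes Real.rpow. Let y : ℝ satisfy (1 − α)*y < 1, and set x* = (1 + (α − 1)*y)^(1/(α − 1)) and c = (1/α)*(1 + (α − 1)*y)^(α/(α − 1)) − 1/α. Then c is the greatest element of the set { y*x − f_α(x) | x ∈ ℝ, 0 < x }; in particular x* > 0, y*x* − f_α(x*) = c, and y*x − f_α(x) ≤ c for all x > 0. -/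
/-!
The derivative of `f_α` is the deformed logarithm `x ↦ (x ^ (α - 1) - 1) / (α - 1)`, which is
increasing, so `f_α` is convex. A convex function lies above its tangents, hence `x ↦ y * x - f_α x`
is maximal where `f_α' x = y`, that is, at the deformed exponential of `y`. The maximal value at
a point `x` with slope `f_α' x` is again a deformed logarithm, now of exponent `α`.
-/

open Set

theorem isMaxOn_mul_sub_of_convexOn_of_hasDerivWithinAt {S : Set ℝ} {f : ℝ → ℝ} {a y : ℝ}
    (hf : ConvexOn ℝ S f) (ha : a ∈ S) (hderiv : HasDerivWithinAt f y S a) :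
    IsMaxOn (fun x ↦ y * x - f x) S a := by
  refine isMaxOn_iff.mpr fun x hx ↦ ?_
  rcases lt_trichotomy x a with hxa | rfl | hax
  · have hslope := hf.slope_le_of_hasDerivWithinAt hx ha hxa hderiv
    rw [slope_def_field, div_le_iff₀ (sub_pos.mpr hxa)] at hslope
    linarith
  · exact le_rfl
  · have hslope := hf.le_slope_of_hasDerivWithinAt ha hx hax hderiv
    rw [slope_def_field, le_div_iff₀ (sub_pos.mpr hax)] at hslope
    linarith

/-- The deformed (Tsallis, or Box–Cox) logarithm of exponent `r`, usually written `ln_q` with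
`q = 1 - r`. At `r = 0` it is the junk value `0` rather than the limit `Real.log`. -/
noncomputable def deformedLog (r x : ℝ) : ℝ := (x ^ r - 1) / r

/-- The deformed exponential of exponent `r`, the inverse of `deformedLog r` on the set of `y` with
`0 < 1 + r * y`. At `r = 0` it is the junk value `1` rather than the limit `Real.exp`. -/
noncomputable def deformedExp (r y : ℝ) : ℝ := (1 + r * y) ^ (1 / r)

/-- The generator `f_α` of the α-divergence. It is normalised so that `f_α 1 = f_α' 1 = 0`;
at `α = 0` and `α = 1` it is the junk value `0`. -/
noncomputable def alphaGenerator (α x : ℝ) : ℝ := ((x ^ α - 1) - α * (x - 1)) / (α * (α - 1))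

theorem monotoneOn_deformedLog (r : ℝ) : MonotoneOn (deformedLog r) (Ioi 0) := by
  intro a ha b hb hab
  rcases le_total 0 r with hr | hr
  · have hpow : a ^ r ≤ b ^ r := Real.rpow_le_rpow (le_of_lt ha) hab hr
    exact div_le_div_of_nonneg_right (sub_le_sub_right hpow 1) hr
  · have hpow : b ^ r ≤ a ^ r := Real.antitoneOn_rpow_Ioi_of_exponent_nonpos hr ha hb hab
    exact div_le_div_of_nonpos_of_le hr (sub_le_sub_right hpow 1)

theorem deformedExp_pos {r y : ℝ} (hy : 0 < 1 + r * y) : 0 < deformedExp r y :=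
  Real.rpow_pos_of_pos hy _

theorem deformedExp_rpow {r y : ℝ} (hy : 0 ≤ 1 + r * y) (s : ℝ) :
    deformedExp r y ^ s = (1 + r * y) ^ (s / r) := by
  rw [deformedExp, ← Real.rpow_mul hy, one_div_mul_eq_div]

theorem deformedLog_deformedExp {r y : ℝ} (hr : r ≠ 0) (hy : 0 ≤ 1 + r * y) :
    deformedLog r (deformedExp r y) = y := by
  rw [deformedLog, deformedExp_rpow hy, div_self hr, Real.rpow_one, add_sub_cancel_left,
    mul_div_cancel_left₀ y hr]

section Generator

variable {α : ℝ}

theorem hasDerivAt_alphaGenerator (hα : α ≠ 0) {x : ℝ} (hx : x ≠ 0) :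
    HasDerivAt (alphaGenerator α) (deformedLog (α - 1) x) x := by
  have hpow : HasDerivAt (fun t ↦ t ^ α - 1) (α * x ^ (α - 1)) x :=
    (Real.hasDerivAt_rpow_const (Or.inl hx)).sub_const 1
  have hlin : HasDerivAt (fun t ↦ α * (t - 1)) (α * 1) x :=
    ((hasDerivAt_id x).sub_const 1).const_mul α
  refine ((hpow.sub hlin).div_const (α * (α - 1))).congr_deriv ?_
  rw [deformedLog, ← mul_sub, mul_div_mul_left _ _ hα]

theorem convexOn_alphaGenerator (hα : α ≠ 0) : ConvexOn ℝ (Ioi 0) (alphaGenerator α) := by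
  have hderiv {x : ℝ} (hx : x ∈ Ioi 0) := hasDerivAt_alphaGenerator hα (ne_of_gt hx)
  refine MonotoneOn.convexOn_of_deriv (convex_Ioi 0)
    (fun x hx ↦ (hderiv hx).continuousAt.continuousWithinAt) ?_ ?_ <;> rw [interior_Ioi]
  · exact fun x hx ↦ (hderiv hx).differentiableAt.differentiableWithinAt
  · exact (monotoneOn_deformedLog (α - 1)).congr fun x hx ↦ (hderiv hx).deriv.symm

theorem deformedLog_mul_sub_alphaGenerator (hα0 : α ≠ 0) (hα1 : α ≠ 1) {x : ℝ} (hx : x ≠ 0) :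
    deformedLog (α - 1) x * x - alphaGenerator α x = deformedLog α x := by
  have hα1' : α - 1 ≠ 0 := sub_ne_zero.mpr hα1
  rw [deformedLog, deformedLog, alphaGenerator, Real.rpow_sub_one hx]
  field_simp
  ring

theorem isMaxOn_mul_sub_alphaGenerator (hα0 : α ≠ 0) (hα1 : α ≠ 1) {y : ℝ}
    (hy : 0 < 1 + (α - 1) * y) :
    IsMaxOn (fun x ↦ y * x - alphaGenerator α x) (Ioi 0) (deformedExp (α - 1) y) := by
  have hpos := deformedExp_pos hy
  have hderiv := hasDerivAt_alphaGenerator hα0 hpos.ne'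
  rw [deformedLog_deformedExp (sub_ne_zero.mpr hα1) hy.le] at hderiv
  exact isMaxOn_mul_sub_of_convexOn_of_hasDerivWithinAt (convexOn_alphaGenerator hα0) hpos
    hderiv.hasDerivWithinAt

theorem mul_deformedExp_sub_alphaGenerator (hα0 : α ≠ 0) (hα1 : α ≠ 1) {y : ℝ}
    (hy : 0 < 1 + (α - 1) * y) :
    y * deformedExp (α - 1) y - alphaGenerator α (deformedExp (α - 1) y) =
      deformedLog α (deformedExp (α - 1) y) := by
  have hyoung := deformedLog_mul_sub_alphaGenerator hα0 hα1 (deformedExp_pos hy).ne'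
  rwa [deformedLog_deformedExp (sub_ne_zero.mpr hα1) hy.le] at hyoung

end Generator

/-- Legendre–Fenchel conjugate of the α-divergence generator:
for `(1 − α) y < 1`, the supremum of `y x − f_α x` over `x > 0` equals
`(1/α)(1 + (α − 1) y)^{α/(α−1)} − 1/α`, attained at
`x* = (1 + (α − 1) y)^{1/(α−1)}`. -/
theorem alphaDivergence_conjugate
    (α : ℝ) (hα0 : α ≠ 0) (hα1 : α ≠ 1)
    (f : ℝ → ℝ)
    (hf : ∀ x : ℝ, 0 < x → f x = ((x ^ α - 1) - α * (x - 1)) / (α * (α - 1)))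
    (y : ℝ) (hy : (1 - α) * y < 1)
    (xstar : ℝ) (hxstar : xstar = (1 + (α - 1) * y) ^ (1 / (α - 1)))
    (c : ℝ) (hc : c = (1 / α) * (1 + (α - 1) * y) ^ (α / (α - 1)) - 1 / α) :
    IsGreatest {z : ℝ | ∃ x : ℝ, 0 < x ∧ z = y * x - f x} c ∧
      0 < xstar ∧ y * xstar - f xstar = c ∧
      ∀ x : ℝ, 0 < x → y * x - f x ≤ c := by
  have hbase : 0 < 1 + (α - 1) * y := by linarith
  have hfα : ∀ x, 0 < x → f x = alphaGenerator α x := hf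
  change xstar = deformedExp (α - 1) y at hxstar
  have hpos : 0 < xstar := hxstar ▸ deformedExp_pos hbase
  have hval : y * xstar - f xstar = c := by
    rw [hfα xstar hpos, hxstar, mul_deformedExp_sub_alphaGenerator hα0 hα1 hbase, deformedLog,
      deformedExp_rpow hbase.le, hc]
    ring
  have hle : ∀ x : ℝ, 0 < x → y * x - f x ≤ c := by
    intro x hx
    rw [← hval, hfα x hx, hfα xstar hpos, hxstar]
    exact isMaxOn_iff.mp (isMaxOn_mul_sub_alphaGenerator hα0 hα1 hbase) x hx
  refine ⟨⟨⟨xstar, hpos, hval.symm⟩, ?_⟩, hpos, hval, hle⟩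
  rintro _ ⟨x, hx, rfl⟩
  exact hle x hx
end
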